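/- Let α > 1 with α ∉ ℚ ∪ ℚ₂, let h₀ ≥ 1 be an integer, and define Ŵ = ([−⌈h₀^α⌉, ⌈h₀^α⌉] × [0, h₀]) ∪ {x ∈ ℍ : |x₁| ≥ ⌈h₀^α⌉, x₂ ≤ |x₁|^{1/α}} and ξ₀ = (0, h₀). Set β = 4/(α+3), γ = 2(α−1)/(α+3), α₁ = β + γ, k₀ = max(min{k : 2^{βk} > 2h₀}, 2⌈(α+3)/(α−1)⌉, ⌈3/(α₁−1)⌉), k_i = k₀ + i for i ≥ 0, and s_i = {(y₁, 2^{k_i}) ∈ ℤ² : |y₁| ≤ Σ_{j=1}^{i} 2^{(1+γ)k_j}} (with s_0 = {(0, 2^{k₀})}). Then there exists a constant c > 0 such that for every i ≥ 0, the simple random walk started at ξ₀ satisfies P_{ξ₀}(τ_{s_i} < τ_{Ŵ}) ≥ c · 2^{−k_i}. -/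

import Mathlib

open Filter

namespace SHM

/-- The upper half planar lattice `ℍ = {(x₁,x₂) ∈ ℤ² : x₂ ≥ 0}` (including the x-axis). -/
def upperH : Set (ℤ × ℤ) := {p | 0 ≤ p.2}

/-- The horizontal line `L_n = {(x,n) : x ∈ ℤ}` of height `n`. -/
def lineH (n : ℤ) : Set (ℤ × ℤ) := {p | p.2 = n}

/-- The four unit steps of the planar simple random walk. -/
def dirs : Finset (ℤ × ℤ) := {(1,0), (-1,0), (0,1), (0,-1)}

/-- The position after `m` steps of the walk started at `z` whose first `n`
increments are given by `σ`. -/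
def pos (z : ℤ × ℤ) {n : ℕ} (σ : Fin n → ℤ × ℤ) (m : ℕ) : ℤ × ℤ :=
  z + ∑ i ∈ Finset.univ.filter (fun i : Fin n => (i : ℕ) < m), σ i

/-- The probability that the first `n` increments of the simple random walk
(each uniform on the four unit vectors) satisfy the predicate `E`. -/
noncomputable def stepProb (n : ℕ) (E : (Fin n → ℤ × ℤ) → Prop) : ℝ :=
  (Nat.card {σ : Fin n → ↥dirs // E fun i => ((σ i : ℤ × ℤ))} : ℝ) / 4 ^ n

/-- `P_z(S_{τ̄_A} = x)` : the walk started at `z` hits `A` (in finite time) for the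
first time precisely at the point `x`.  Here `τ̄_A = min {m ≥ 0 : S_m ∈ A}`. -/
noncomputable def hitProb (z : ℤ × ℤ) (A : Set (ℤ × ℤ)) (x : ℤ × ℤ) : ℝ :=
  ∑' n : ℕ, stepProb n fun σ =>
    pos z σ n = x ∧ x ∈ A ∧ ∀ m < n, pos z σ m ∉ A

/-- `P_z(τ̄_A < τ̄_B)` : the walk started at `z` hits `A` strictly before hitting `B`. -/
noncomputable def hitBeforeProb (z : ℤ × ℤ) (A B : Set (ℤ × ℤ)) : ℝ :=
  ∑' n : ℕ, stepProb n fun σ =>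
    pos z σ n ∈ A ∧ pos z σ n ∉ B ∧ ∀ m < n, pos z σ m ∉ A ∧ pos z σ m ∉ B

/-- The stationary harmonic measure `H_{B,N}(x) = Σ_{z ∈ L_N \ B} P_z(S_{τ̄_{B ∪ L₀}} = x)`. -/
noncomputable def harm (B : Set (ℤ × ℤ)) (N : ℕ) (x : ℤ × ℤ) : ℝ :=
  ∑' z : ↥(lineH (N : ℤ) \ B), hitProb (z : ℤ × ℤ) (B ∪ lineH 0) x

/-- `ℚ₁ = {log n₁ / log n₂ : n₁, n₂ ∈ ℤ, n₁, n₂ ≥ 2}`. -/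
def Q1 : Set ℝ := {r | ∃ n₁ n₂ : ℤ, 2 ≤ n₁ ∧ 2 ≤ n₂ ∧ r = Real.log n₁ / Real.log n₂}

/-- `ℚ₂ = {(b − dx)/(cx − a) ∈ ℝ : x ∈ ℚ₁, a, b, c, d ∈ ℤ}`. -/
def Q2 : Set ℝ :=
  {r | ∃ x ∈ Q1, ∃ a b c d : ℤ, (c : ℝ) * x - a ≠ 0 ∧ r = ((b : ℝ) - d * x) / ((c : ℝ) * x - a)}

/-- The box `D₀ = [−⌈h₀^α⌉, ⌈h₀^α⌉] × [0, h₀]`. -/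
def boxD₀ (α : ℝ) (h₀ : ℤ) : Set (ℤ × ℤ) :=
  {x | |x.1| ≤ ⌈(h₀ : ℝ) ^ α⌉ ∧ 0 ≤ x.2 ∧ x.2 ≤ h₀}

/-- The region `U_{h₀} = {x ∈ ℍ : |x₁| ≥ ⌈h₀^α⌉, x₂ ≤ |x₁|^{1/α}}`. -/
def regionU (α : ℝ) (h₀ : ℤ) : Set (ℤ × ℤ) :=
  {x ∈ upperH | ⌈(h₀ : ℝ) ^ α⌉ ≤ |x.1| ∧ (x.2 : ℝ) ≤ |(x.1 : ℝ)| ^ (1 / α)}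

/-- `Ŵ = D₀ ∪ U_{h₀}`. -/
def What (α : ℝ) (h₀ : ℤ) : Set (ℤ × ℤ) := boxD₀ α h₀ ∪ regionU α h₀

/-- The middle section `s_i = {(y₁, 2^{k_i}) : |y₁| ≤ Σ_{j=1}^{i} 2^{(1+γ)k_j}}`
at height `2^{k_i}` with `k_i = k₀ + i` (so `s_0 = {(0, 2^{k₀})}`). -/
def midSec (γ : ℝ) (k₀ i : ℕ) : Set (ℤ × ℤ) :=
  {y | y.2 = (2 : ℤ) ^ (k₀ + i) ∧
       |(y.1 : ℝ)| ≤ ∑ j ∈ Finset.Icc 1 i, (2 : ℝ) ^ ((1 + γ) * ((k₀ + j : ℕ) : ℝ))}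

/-- `P_z(τ_A < τ_B)` : the walk started at `z` hits `A` strictly before `B`, where
`τ_A = min {m ≥ 1 : S_m ∈ A}` denotes exit (positive-time hitting) times. -/
noncomputable def exitBeforeProb (z : ℤ × ℤ) (A B : Set (ℤ × ℤ)) : ℝ :=
  ∑' n : ℕ, stepProb n fun σ =>
    0 < n ∧ pos z σ n ∈ A ∧ pos z σ n ∉ B ∧
      ∀ m, 0 < m → m < n → pos z σ m ∉ A ∧ pos z σ m ∉ B

/-! ### First-step analysis -/

lemma pos_zero (z : ℤ × ℤ) {n : ℕ} (σ : Fin n → ℤ × ℤ) : pos z σ 0 = z := by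
  simp [pos]

lemma pos_cons (z d : ℤ × ℤ) {n : ℕ} (σ : Fin n → ℤ × ℤ) (m : ℕ) :
    pos z (Fin.cons d σ : Fin (n+1) → ℤ × ℤ) (m+1) = pos (z + d) σ m := by
  simp [pos, Finset.sum_filter, Fin.sum_univ_succ, add_assoc]

/-- average over the four neighbours -/
noncomputable def avg (u : ℤ × ℤ → ℝ) (z : ℤ × ℤ) : ℝ :=
  (u (z + (1,0)) + u (z + (-1,0)) + u (z + (0,1)) + u (z + (0,-1))) / 4

lemma stepProb_nonneg (n : ℕ) (E : (Fin n → ℤ × ℤ) → Prop) : 0 ≤ stepProb n E := by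
  unfold stepProb; positivity

lemma sum_dirs (F : ℤ × ℤ → ℝ) :
    ∑ d : ↥dirs, F d = F (1,0) + F (-1,0) + F (0,1) + F (0,-1) := by
  rw [Finset.sum_coe_sort dirs F]
  simp [dirs]
  ring

lemma stepProb_succ (n : ℕ) (E : (Fin (n+1) → ℤ × ℤ) → Prop) :
    stepProb (n+1) E = (∑ d : ↥dirs,
      stepProb n (fun σ => E (Fin.cons (d : ℤ × ℤ) σ : Fin (n+1) → ℤ × ℤ))) / 4 := by
  classical
  have key : Nat.card {σ : Fin (n+1) → ↥dirs // E fun i => ((σ i : ℤ × ℤ))} =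
      ∑ d : ↥dirs, Nat.card {σ : Fin n → ↥dirs //
        E (Fin.cons (d : ℤ × ℤ) (fun i => ((σ i : ℤ × ℤ))) : Fin (n+1) → ℤ × ℤ)} := by
    rw [← Nat.card_sigma]
    apply Nat.card_congr
    have hc : ∀ (d : ↥dirs) (σ : Fin n → ↥dirs),
        (fun i => (((Fin.cons d σ : Fin (n+1) → ↥dirs) i : ↥dirs) : ℤ × ℤ)) =
        (Fin.cons (d : ℤ × ℤ) (fun i => ((σ i : ℤ × ℤ))) : Fin (n+1) → ℤ × ℤ) := by
      intro d σ
      funext i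
      refine Fin.cases ?_ (fun j => ?_) i <;> simp
    refine
      { toFun := fun s => ⟨s.1 0, ⟨Fin.tail s.1, ?_⟩⟩
        invFun := fun t => ⟨Fin.cons t.1 t.2.1, ?_⟩
        left_inv := ?_
        right_inv := ?_ }
    · have := s.2
      rw [← hc, Fin.cons_self_tail]
      exact this
    · rw [hc]; exact t.2.2
    · intro s
      simp
    · intro t
      rcases t with ⟨d, σ, h⟩
      rfl
  unfold stepProb
  rw [key, ← Finset.sum_div, pow_succ]
  push_cast
  field_simp

/-- the `n`-th term of `hitBeforeProb` -/
noncomputable def qn (A B : Set (ℤ × ℤ)) (n : ℕ) (z : ℤ × ℤ) : ℝ :=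
  stepProb n fun σ =>
    pos z σ n ∈ A ∧ pos z σ n ∉ B ∧ ∀ m < n, pos z σ m ∉ A ∧ pos z σ m ∉ B

lemma stepProb_false (n : ℕ) (E : (Fin n → ℤ × ℤ) → Prop) (h : ∀ σ, ¬ E σ) :
    stepProb n E = 0 := by
  simp [stepProb, h]

lemma qn_nonneg (A B : Set (ℤ × ℤ)) (n : ℕ) (z : ℤ × ℤ) : 0 ≤ qn A B n z :=
  stepProb_nonneg _ _

lemma qn_zero_mem {A B : Set (ℤ × ℤ)} {z : ℤ × ℤ} (hA : z ∈ A) (hB : z ∉ B) :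
    qn A B 0 z = 1 := by
  simp [qn, stepProb, pos_zero, hA, hB]

lemma qn_zero_not {A B : Set (ℤ × ℤ)} {z : ℤ × ℤ} (h : z ∉ A ∨ z ∈ B) :
    qn A B 0 z = 0 := by
  apply stepProb_false
  intro σ
  rw [pos_zero]
  tauto

lemma qn_succ_mem {A B : Set (ℤ × ℤ)} (n : ℕ) {z : ℤ × ℤ} (h : z ∈ A ∨ z ∈ B) :
    qn A B (n+1) z = 0 := by
  apply stepProb_false
  rintro σ ⟨_, _, h3⟩
  have := h3 0 (by omega)
  rw [pos_zero] at this
  tauto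

lemma qn_succ {A B : Set (ℤ × ℤ)} (n : ℕ) {z : ℤ × ℤ} (hA : z ∉ A) (hB : z ∉ B) :
    qn A B (n+1) z = avg (qn A B n) z := by
  unfold avg
  rw [← sum_dirs (fun d => qn A B n (z + d))]
  unfold qn
  rw [stepProb_succ]
  congr 1
  apply Finset.sum_congr rfl
  intro d _
  congr 1
  funext σ
  apply propext
  rw [pos_cons]
  refine and_congr Iff.rfl (and_congr Iff.rfl ?_)
  constructor
  · intro h m hm
    have := h (m+1) (by omega)
    rwa [pos_cons] at this
  · intro h m hm
    rcases m with _ | m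
    · rw [pos_zero]; exact ⟨hA, hB⟩
    · rw [pos_cons]; exact h m (by omega)

lemma exit_term (A B : Set (ℤ × ℤ)) (n : ℕ) (z : ℤ × ℤ) :
    (stepProb (n+1) fun σ =>
    0 < n+1 ∧ pos z σ (n+1) ∈ A ∧ pos z σ (n+1) ∉ B ∧
      ∀ m, 0 < m → m < n+1 → pos z σ m ∉ A ∧ pos z σ m ∉ B) = avg (qn A B n) z := by
  unfold avg
  rw [← sum_dirs (fun d => qn A B n (z + d))]
  unfold qn
  rw [stepProb_succ]
  congr 1
  apply Finset.sum_congr rfl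
  intro d _
  congr 1
  funext σ
  apply propext
  rw [pos_cons]
  constructor
  · rintro ⟨_, h1, h2, h⟩
    refine ⟨h1, h2, ?_⟩
    intro m hm
    have := h (m+1) (by omega) (by omega)
    rwa [pos_cons] at this
  · rintro ⟨h1, h2, h⟩
    refine ⟨by omega, h1, h2, ?_⟩
    intro m hm0 hm
    rcases m with _ | m
    · omega
    · rw [pos_cons]; exact h m (by omega)

lemma sum_qn_le (A B : Set (ℤ × ℤ)) (N : ℕ) : ∀ z, ∑ n ∈ Finset.range N, qn A B n z ≤ 1 := by
  induction N with
  | zero => intro z; simp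
  | succ N ih =>
    intro z
    rw [Finset.sum_range_succ']
    by_cases hB : z ∈ B
    · rw [qn_zero_not (Or.inr hB), Finset.sum_eq_zero (fun n _ => qn_succ_mem n (Or.inr hB))]
      norm_num
    by_cases hA : z ∈ A
    · rw [qn_zero_mem hA hB, Finset.sum_eq_zero (fun n _ => qn_succ_mem n (Or.inl hA))]
      norm_num
    · rw [qn_zero_not (Or.inl hA), Finset.sum_congr rfl (fun n _ => qn_succ n hA hB)]
      simp only [avg, ← Finset.sum_div, Finset.sum_add_distrib]
      linarith [ih (z + (1,0)), ih (z + (-1,0)), ih (z + (0,1)), ih (z + (0,-1))]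

lemma summable_qn (A B : Set (ℤ × ℤ)) (z : ℤ × ℤ) : Summable (fun n => qn A B n z) :=
  summable_of_sum_range_le (fun n => qn_nonneg A B n z) (fun N => sum_qn_le A B N z)

lemma hit_eq (A B : Set (ℤ × ℤ)) (z : ℤ × ℤ) : hitBeforeProb z A B = ∑' n, qn A B n z := rfl

lemma hit_nonneg (A B : Set (ℤ × ℤ)) (z : ℤ × ℤ) : 0 ≤ hitBeforeProb z A B :=
  tsum_nonneg (fun n => qn_nonneg A B n z)

lemma hit_mem {A B : Set (ℤ × ℤ)} {z : ℤ × ℤ} (hA : z ∈ A) (hB : z ∉ B) :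
    hitBeforeProb z A B = 1 := by
  rw [hit_eq, (summable_qn A B z).tsum_eq_zero_add, qn_zero_mem hA hB]
  simp [qn_succ_mem _ (Or.inl hA : z ∈ A ∨ z ∈ B)]

lemma avg_tsum (A B : Set (ℤ × ℤ)) (z : ℤ × ℤ) :
    HasSum (fun n => avg (qn A B n) z) (avg (fun w => hitBeforeProb w A B) z) := by
  have h := fun w => (summable_qn A B w).hasSum
  exact ((((h _).add (h _)).add (h _)).add (h _)).div_const 4

lemma hit_avg {A B : Set (ℤ × ℤ)} {z : ℤ × ℤ} (hA : z ∉ A) (hB : z ∉ B) :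
    hitBeforeProb z A B = avg (fun w => hitBeforeProb w A B) z := by
  rw [hit_eq, (summable_qn A B z).tsum_eq_zero_add, qn_zero_not (Or.inl hA), zero_add]
  simp only [qn_succ _ hA hB]
  exact (avg_tsum A B z).tsum_eq

lemma exit_avg (A B : Set (ℤ × ℤ)) (z : ℤ × ℤ) :
    exitBeforeProb z A B = avg (fun w => hitBeforeProb w A B) z := by
  unfold exitBeforeProb
  set t : ℕ → ℝ := fun n => stepProb n fun σ =>
    0 < n ∧ pos z σ n ∈ A ∧ pos z σ n ∉ B ∧
      ∀ m, 0 < m → m < n → pos z σ m ∉ A ∧ pos z σ m ∉ B with ht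
  have h0 : t 0 = 0 := by
    apply stepProb_false
    intro σ h
    exact absurd h.1 (lt_irrefl _)
  have h1 : ∀ n, t (n+1) = avg (qn A B n) z := fun n => exit_term A B n z
  have hs : HasSum (fun n => t (n+1)) (avg (fun w => hitBeforeProb w A B) z) := by
    simp only [h1]; exact avg_tsum A B z
  have hs' : Summable t := (summable_nat_add_iff 1).1 hs.summable
  rw [hs'.tsum_eq_zero_add, h0, zero_add, hs.tsum_eq]

lemma avg_ge_up (u : ℤ × ℤ → ℝ) (hu : ∀ z, 0 ≤ u z) (z : ℤ × ℤ) :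
    u (z + (0,1)) / 4 ≤ avg u z := by
  unfold avg
  linarith [hu (z + (1,0)), hu (z + (-1,0)), hu (z + (0,-1))]

/-! ### Maximum principle -/

lemma max_principle (D : Finset (ℤ × ℤ)) (w : ℤ × ℤ → ℝ)
    (hsub : ∀ z ∈ D, w z ≤ avg w z)
    (hbd : ∀ z ∈ D, ∀ d ∈ dirs, z + d ∉ D → w (z + d) ≤ 0) :
    ∀ z ∈ D, w z ≤ 0 := by
  by_contra! hcon
  obtain ⟨z₀, hz₀, hpos⟩ := hcon
  obtain ⟨z₁, hz₁, hmax⟩ := D.exists_max_image w ⟨z₀, hz₀⟩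
  have hm : 0 < w z₁ := lt_of_lt_of_le hpos (hmax z₀ hz₀)
  obtain ⟨z₂, hz₂, hmax2⟩ := (D.filter (fun z => w z = w z₁)).exists_max_image (fun z => z.1)
    ⟨z₁, by simp [hz₁]⟩
  rw [Finset.mem_filter] at hz₂
  have hle : ∀ d ∈ dirs, w (z₂ + d) ≤ w z₁ := by
    intro d hd
    by_cases h : z₂ + d ∈ D
    · exact hmax _ h
    · exact (hbd z₂ hz₂.1 d hd h).trans hm.le
  have h1 := hle (1,0) (by simp [dirs])
  have h2 := hle (-1,0) (by simp [dirs])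
  have h3 := hle (0,1) (by simp [dirs])
  have h4 := hle (0,-1) (by simp [dirs])
  have hs := hsub z₂ hz₂.1
  unfold avg at hs
  have heq : w (z₂ + (1,0)) = w z₁ := by
    rw [hz₂.2] at hs; linarith
  have hin : z₂ + (1,0) ∈ D := by
    by_contra h
    have := hbd z₂ hz₂.1 (1,0) (by simp [dirs]) h
    linarith
  have := hmax2 _ (Finset.mem_filter.2 ⟨hin, heq⟩)
  simp at this

/-! ### The barrier -/

/-- Truncated quadratic barrier: superharmonic. -/
noncomputable def bar (N : ℝ) (z : ℤ × ℤ) : ℝ :=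
  if (z.2 : ℝ) ≤ N then min 1 (((z.1 : ℝ)^2 + 2 * N * z.2 - (z.2 : ℝ)^2) / N^2) else 1

lemma bar_le_one (N : ℝ) (z : ℤ × ℤ) : bar N z ≤ 1 := by
  unfold bar; split_ifs <;> simp

lemma bar_le (N : ℝ) (z : ℤ × ℤ) (h : (z.2 : ℝ) ≤ N) :
    bar N z ≤ ((z.1 : ℝ)^2 + 2 * N * z.2 - (z.2 : ℝ)^2) / N^2 := by
  unfold bar; rw [if_pos h]; exact min_le_right _ _

lemma bar_super (N : ℕ) (hN : 0 < N) (z : ℤ × ℤ) : avg (bar N) z ≤ bar N z := by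
  have hN' : (0:ℝ) < N := by exact_mod_cast hN
  have a1 := bar_le_one N (z + (1,0))
  have a2 := bar_le_one N (z + (-1,0))
  have a3 := bar_le_one N (z + (0,1))
  have a4 := bar_le_one N (z + (0,-1))
  by_cases h1 : 1 ≤ bar N z
  · unfold avg; linarith
  push Not at h1
  have hy : (z.2 : ℝ) ≤ N := by
    by_contra h
    simp [bar, h] at h1
  have hb : bar N z = ((z.1 : ℝ)^2 + 2 * N * z.2 - (z.2 : ℝ)^2) / (N:ℝ)^2 := by
    unfold bar at h1 ⊢
    rw [if_pos hy] at h1 ⊢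
    rcases min_choice (1:ℝ) (((z.1 : ℝ)^2 + 2 * N * z.2 - (z.2 : ℝ)^2) / (N:ℝ)^2) with h | h
    · rw [h] at h1; exact absurd h1 (lt_irrefl _)
    · exact h
  have hlt : z.2 + 1 ≤ (N:ℤ) := by
    have h2 : z.2 ≤ (N:ℤ) := by exact_mod_cast hy
    rcases h2.lt_or_eq with h | h
    · omega
    · exfalso
      rw [hb, h, div_lt_one (by positivity)] at h1
      push_cast at h1
      nlinarith [sq_nonneg (z.1 : ℝ)]
  have hlt' : (z.2:ℝ) + 1 ≤ N := by exact_mod_cast hlt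
  have b1 := bar_le N (z + (1,0)) (by simpa using hy)
  have b2 := bar_le N (z + (-1,0)) (by simpa using hy)
  have b3 := bar_le N (z + (0,1)) (by simpa using hlt')
  have b4 := bar_le N (z + (0,-1)) (by push_cast [Prod.snd_add]; linarith)
  rw [hb]
  unfold avg
  refine (div_le_div_of_nonneg_right (add_le_add (add_le_add (add_le_add b1 b2) b3) b4)
    (by norm_num)).trans (le_of_eq ?_)
  simp only [Prod.fst_add, Prod.snd_add]
  push_cast
  field_simp
  ring

lemma bar_nonneg (N : ℝ) (hN : 0 < N) (z : ℤ × ℤ) (hz : 0 ≤ z.2) : 0 ≤ bar N z := by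
  have hz' : (0:ℝ) ≤ z.2 := by exact_mod_cast hz
  unfold bar
  split_ifs with h
  · refine le_min zero_le_one (div_nonneg ?_ (by positivity))
    nlinarith [sq_nonneg (z.1 : ℝ)]
  · exact zero_le_one

lemma bar_eq_one (N : ℝ) (hN : 0 < N) (z : ℤ × ℤ) (hz : 0 ≤ z.2) (hx : N ≤ |(z.1 : ℝ)|) :
    1 ≤ bar N z := by
  have hz' : (0:ℝ) ≤ z.2 := by exact_mod_cast hz
  unfold bar
  split_ifs with h
  · refine le_min le_rfl ((one_le_div (by positivity)).2 ?_)
    have : N^2 ≤ (z.1:ℝ)^2 := by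
      rw [← sq_abs (z.1:ℝ)]; gcongr
    nlinarith
  · exact le_rfl

lemma bar_axis (N : ℝ) (hN : 0 < N) (y : ℤ) (hy : 0 ≤ y) : bar N (0, y) ≤ 2 * y / N := by
  have hy' : (0:ℝ) ≤ y := by exact_mod_cast hy
  by_cases h : (y:ℝ) ≤ N
  · refine (bar_le N (0,y) h).trans ?_
    rw [div_le_div_iff₀ (by positivity) hN]
    simp only [Int.cast_zero]
    nlinarith [mul_nonneg (sq_nonneg (y:ℝ)) hN.le]
  · refine (bar_le_one _ _).trans ((one_le_div hN).2 ?_)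
    push Not at h
    linarith

/-- sum of barriers -/
noncomputable def gsum (ρ : ℝ) (K : ℕ) (z : ℤ × ℤ) : ℝ :=
  ∑ k ∈ Finset.range K, ρ^k * bar ((2^k : ℕ) : ℝ) z

lemma gsum_super (ρ : ℝ) (hρ : 0 ≤ ρ) (K : ℕ) (z : ℤ × ℤ) : avg (gsum ρ K) z ≤ gsum ρ K z := by
  have : avg (gsum ρ K) z = ∑ k ∈ Finset.range K, ρ^k * avg (bar ((2^k : ℕ) : ℝ)) z := by
    unfold avg gsum
    rw [← Finset.sum_add_distrib, ← Finset.sum_add_distrib, ← Finset.sum_add_distrib,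
      Finset.sum_div]
    apply Finset.sum_congr rfl
    intro k _
    ring
  rw [this]
  apply Finset.sum_le_sum
  intro k _
  exact mul_le_mul_of_nonneg_left (bar_super _ (by positivity) z) (by positivity)

lemma gsum_nonneg (ρ : ℝ) (hρ : 0 ≤ ρ) (K : ℕ) (z : ℤ × ℤ) (hz : 0 ≤ z.2) : 0 ≤ gsum ρ K z :=
  Finset.sum_nonneg fun k _ => mul_nonneg (by positivity) (bar_nonneg _ (by positivity) z hz)

lemma gsum_lower (p : ℝ) (hp0 : 0 < p) (hp1 : p ≤ 1) (K : ℕ) (z : ℤ × ℤ) (hz : 0 ≤ z.2)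
    (hx : |z.1| < 2^K) :
    |(z.1:ℝ)|^p ≤ 2 * gsum ((2:ℝ)^p) K z := by
  have hρ : (0:ℝ) ≤ (2:ℝ)^p := by positivity
  by_cases h0 : z.1 = 0
  · rw [h0]
    simp only [Int.cast_zero, abs_zero]
    rw [Real.zero_rpow hp0.ne']
    linarith [gsum_nonneg _ hρ K z hz]
  · set a := z.1.natAbs with ha
    have ha0 : a ≠ 0 := by omega
    have haz : |(z.1:ℝ)| = (a:ℝ) := by
      rw [ha, Nat.cast_natAbs, Int.cast_abs]
    set k := Nat.log 2 a with hk
    have hlo : 2^k ≤ a := Nat.pow_log_le_self 2 ha0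
    have hhi : a < 2^(k+1) := Nat.lt_pow_succ_log_self (by norm_num) a
    have haK : a < 2^K := by
      have : (a:ℤ) < 2^K := by rw [ha, Int.natCast_natAbs]; exact hx
      exact_mod_cast this
    have hkK : k < K := (Nat.pow_lt_pow_iff_right (by norm_num : 1 < 2)).1 (hlo.trans_lt haK)
    have hg : ((2:ℝ)^p)^k ≤ gsum ((2:ℝ)^p) K z := by
      have h1 : ((2:ℝ)^p)^k * bar ((2^k : ℕ) : ℝ) z ≤ gsum ((2:ℝ)^p) K z := by
        unfold gsum
        exact Finset.single_le_sum (f := fun k => ((2:ℝ)^p)^k * bar ((2^k : ℕ) : ℝ) z)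
          (fun k _ => mul_nonneg (by positivity) (bar_nonneg _ (by positivity) z hz))
          (Finset.mem_range.2 hkK)
      have h2 := bar_eq_one ((2^k : ℕ) : ℝ) (by positivity) z hz
        (by rw [haz]; exact_mod_cast hlo)
      exact (le_mul_of_one_le_right (by positivity) h2).trans h1
    have h3 : |(z.1:ℝ)|^p ≤ ((2:ℝ)^(k+1))^p := by
      apply Real.rpow_le_rpow (abs_nonneg _) _ hp0.le
      rw [haz]; exact_mod_cast hhi.le
    have h4 : ((2:ℝ)^(k+1))^p = ((2:ℝ)^p)^k * (2:ℝ)^p := by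
      rw [← Real.rpow_natCast, ← Real.rpow_mul (by norm_num), mul_comm, Real.rpow_mul (by norm_num),
        Real.rpow_natCast, pow_succ]
    have h5 : (2:ℝ)^p ≤ 2 := by
      calc (2:ℝ)^p ≤ (2:ℝ)^(1:ℝ) := Real.rpow_le_rpow_of_exponent_le (by norm_num) hp1
        _ = 2 := by simp
    have h6 : 0 ≤ ((2:ℝ)^p)^k := by positivity
    rw [h4] at h3
    nlinarith

lemma gsum_axis (ρ : ℝ) (hρ : 0 ≤ ρ) (hρ2 : ρ < 2) :
    ∃ C : ℝ, ∀ (K : ℕ) (y : ℤ), 0 ≤ y → gsum ρ K (0, y) ≤ C + y / 12 := by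
  set r := ρ / 2 with hr
  have hr0 : 0 ≤ r := by positivity
  have hr1 : r < 1 := by rw [hr]; linarith
  obtain ⟨J, hJ⟩ : ∃ J : ℕ, r^J < (1 - r) / 24 :=
    exists_pow_lt_of_lt_one (by linarith) hr1
  refine ⟨∑ k ∈ Finset.range J, ρ^k, fun K y hy => ?_⟩
  have hy' : (0:ℝ) ≤ y := by exact_mod_cast hy
  have h1 : gsum ρ K (0,y) ≤ gsum ρ (J + K) (0,y) := by
    unfold gsum
    apply Finset.sum_le_sum_of_subset_of_nonneg
    · intro k hk
      rw [Finset.mem_range] at hk ⊢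
      omega
    · intro k _ _
      exact mul_nonneg (by positivity) (bar_nonneg _ (by positivity) _ hy)
  refine h1.trans ?_
  unfold gsum
  rw [Finset.sum_range_add]
  apply add_le_add
  · apply Finset.sum_le_sum
    intro k _
    exact mul_le_of_le_one_right (by positivity) (bar_le_one _ _)
  · have h2 : ∀ k ∈ Finset.range K, ρ^(J+k) * bar ((2^(J+k) : ℕ) : ℝ) (0,y) ≤
        2 * y * r^J * r^k := by
      intro k _
      refine (mul_le_mul_of_nonneg_left (bar_axis _ (by positivity) y hy) (by positivity)).trans ?_
      apply le_of_eq
      rw [hr]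
      push_cast
      rw [div_pow, div_pow, pow_add, pow_add]
      field_simp
    refine (Finset.sum_le_sum h2).trans ?_
    rw [← Finset.mul_sum]
    have h3 : ∑ k ∈ Finset.range K, r^k ≤ (1 - r)⁻¹ := by
      rw [← tsum_geometric_of_lt_one hr0 hr1]
      exact (summable_geometric_of_lt_one hr0 hr1).sum_le_tsum _ (fun k _ => by positivity)
    have h4 : r^J * (1-r)⁻¹ ≤ 1/24 := by
      rw [← div_eq_mul_inv, div_le_iff₀ (by linarith)]
      linarith
    calc 2 * y * r^J * ∑ k ∈ Finset.range K, r^k ≤ 2 * y * r^J * (1 - r)⁻¹ := by gcongr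
      _ = 2 * y * (r^J * (1-r)⁻¹) := by ring
      _ ≤ 2 * y * (1/24) := by gcongr
      _ = y / 12 := by ring

/-- the subharmonic comparison function -/
noncomputable def ff (ρ : ℝ) (K : ℕ) (h H : ℝ) (z : ℤ × ℤ) : ℝ :=
  z.2 - (3 * (z.1:ℝ)^2 * z.2 - (z.2:ℝ)^3) / (2 * H^2) - 3/2 * h - 3 * gsum ρ K z

lemma ff_sub (ρ : ℝ) (hρ : 0 ≤ ρ) (K : ℕ) (h H : ℝ) (hH : 0 < H) (z : ℤ × ℤ) :
    ff ρ K h H z ≤ avg (ff ρ K h H) z := by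
  have hg := gsum_super ρ hρ K z
  have : avg (ff ρ K h H) z = z.2 - (3 * (z.1:ℝ)^2 * z.2 - (z.2:ℝ)^3) / (2 * H^2) - 3/2 * h
      - 3 * avg (gsum ρ K) z := by
    unfold avg ff
    simp only [Prod.fst_add, Prod.snd_add]
    push_cast
    field_simp
    ring
  rw [this]
  unfold ff
  linarith

lemma ff_le (ρ : ℝ) (K : ℕ) (h H : ℝ) (hH : 0 < H) (z : ℤ × ℤ) (hz : 0 ≤ z.2)
    (hzH : (z.2:ℝ) ≤ H) : ff ρ K h H z ≤ 3/2 * z.2 - 3/2 * h - 3 * gsum ρ K z := by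
  have hz' : (0:ℝ) ≤ z.2 := by exact_mod_cast hz
  have h1 : -((3 * (z.1:ℝ)^2 * z.2 - (z.2:ℝ)^3) / (2 * H^2)) ≤ 1/2 * z.2 := by
    rw [← neg_div, div_le_iff₀ (by positivity)]
    have : (z.2:ℝ)^2 ≤ H^2 := by gcongr
    nlinarith [mul_le_mul_of_nonneg_left this hz', mul_nonneg (sq_nonneg (z.1:ℝ)) hz']
  unfold ff
  linarith

lemma ff_far (ρ : ℝ) (hρ : 0 ≤ ρ) (K : ℕ) (h H : ℝ) (hh : 0 ≤ h) (hH : 0 < H) (z : ℤ × ℤ)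
    (hz : 0 ≤ z.2)
    (hzH : (z.2:ℝ) ≤ H) (hx : H ≤ |(z.1:ℝ)|) : ff ρ K h H z ≤ 0 := by
  have hz' : (0:ℝ) ≤ z.2 := by exact_mod_cast hz
  have h1 : (z.2:ℝ) ≤ ((3 * (z.1:ℝ)^2 * z.2 - (z.2:ℝ)^3) / (2 * H^2)) := by
    rw [le_div_iff₀ (by positivity)]
    have h2 : (z.2:ℝ)^2 ≤ H^2 := by gcongr
    have h3 : H^2 ≤ (z.1:ℝ)^2 := by
      rw [← sq_abs (z.1:ℝ)]; gcongr
    nlinarith [mul_le_mul_of_nonneg_left h2 hz', mul_le_mul_of_nonneg_left h3 hz']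
  have := gsum_nonneg ρ hρ K z hz
  unfold ff
  linarith


lemma hit_chain (A B : Set (ℤ × ℤ)) (y : ℤ) (j : ℕ)
    (h : ∀ m : ℕ, m < j → ((0:ℤ), y + m) ∉ A ∧ ((0:ℤ), y + m) ∉ B) :
    hitBeforeProb (0, y + j) A B / 4^j ≤ hitBeforeProb (0, y) A B := by
  induction j with
  | zero => simp
  | succ j ih =>
    refine le_trans ?_ (ih (fun m hm => h m (by omega)))
    have hj := h j (by omega)
    have h1 := avg_ge_up (fun w => hitBeforeProb w A B) (fun w => hit_nonneg A B w)
      ((0:ℤ), y + j)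
    rw [← hit_avg hj.1 hj.2] at h1
    have e : (((0:ℤ), y + (j:ℤ)) + ((0:ℤ), (1:ℤ))) = ((0:ℤ), y + ((j+1 : ℕ) : ℤ)) := by
      ext <;> simp [add_assoc]
    simp only [e] at h1
    rw [pow_succ, mul_comm, ← div_div]
    gcongr

lemma axis_not_What (α : ℝ) (h₀ : ℤ) (hh₀ : 1 ≤ h₀) (y : ℤ) (hy : h₀ < y) :
    ((0:ℤ), y) ∉ What α h₀ := by
  have hc : (0:ℝ) < (h₀:ℝ)^α := Real.rpow_pos_of_pos (by exact_mod_cast (by omega : 0 < h₀)) _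
  have hc' : 0 < ⌈(h₀:ℝ)^α⌉ := Int.ceil_pos.2 hc
  rintro (h | h)
  · have := h.2.2
    simp only at this
    omega
  · have := h.2.1
    simp only [abs_zero] at this
    omega

lemma line0_What (α : ℝ) (h₀ : ℤ) (hh₀ : 1 ≤ h₀) (x : ℤ) : (x, (0:ℤ)) ∈ What α h₀ := by
  rcases le_total |x| ⌈(h₀:ℝ)^α⌉ with h | h
  · left
    exact ⟨h, le_rfl, by simp only; omega⟩
  · right
    refine ⟨le_refl (0:ℤ), h, ?_⟩
    simp only [Int.cast_zero]
    positivity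

/-- The main comparison. -/
lemma hit_lower (α : ℝ) (hα : 1 < α) (h₀ : ℤ) (hh₀ : 1 ≤ h₀) (C : ℝ)
    (hC : ∀ (K : ℕ) (y : ℤ), 0 ≤ y → gsum ((2:ℝ)^(1/α)) K (0, y) ≤ C + y / 12)
    (S : Set (ℤ × ℤ)) (H : ℕ)
    (hS : ∀ z : ℤ × ℤ, z ∈ S → z.2 = H)
    (hS2 : ∀ z : ℤ × ℤ, z.2 = H → |(z.1:ℝ)| ≤ H → z ∈ S)
    (M : ℕ) (hM : h₀ < M) (hMH : M < H)
    (hMC : 1 + 3/2 * h₀ + 3 * C ≤ 3/4 * (M:ℝ)) :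
    1 / (2 * (H:ℝ)) ≤ hitBeforeProb (0, (M:ℤ)) S (What α h₀) := by
  classical
  have hp0 : 0 < 1/α := by positivity
  have hp1 : 1/α ≤ 1 := by rw [div_le_one (by linarith)]; exact hα.le
  have hρ : (0:ℝ) ≤ (2:ℝ)^(1/α) := by positivity
  have hHpos : (0:ℝ) < H := by exact_mod_cast (by omega : 0 < H)
  have hh : (0:ℝ) ≤ h₀ := by exact_mod_cast (by omega : 0 ≤ h₀)
  -- horizontal extent
  obtain ⟨X, hX⟩ := exists_nat_ge (max ((H:ℝ)^α) (⌈(h₀:ℝ)^α⌉ : ℝ))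
  have hX1 : (H:ℝ)^α ≤ X := (le_max_left _ _).trans hX
  have hX2 : ⌈(h₀:ℝ)^α⌉ ≤ (X:ℤ) := by
    have := (le_max_right _ _).trans hX
    exact_mod_cast this
  set K := X + 1 with hK
  have hXK : X + 1 < 2^K := Nat.lt_two_pow_self
  set D : Finset (ℤ × ℤ) := (Finset.Icc (-(X:ℤ)) X ×ˢ Finset.Ioo (0:ℤ) H).filter
    (fun z => z ∉ What α h₀) with hD
  have memD : ∀ z : ℤ × ℤ, z ∉ What α h₀ → 0 < z.2 → z.2 < H → z ∈ D := by
    intro z hz h1 h2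
    rw [hD, Finset.mem_filter, Finset.mem_product, Finset.mem_Icc, Finset.mem_Ioo, ← abs_le]
    refine ⟨⟨?_, h1, h2⟩, hz⟩
    by_contra hcon
    push Not at hcon
    apply hz
    right
    refine ⟨h1.le, hX2.trans hcon.le, ?_⟩
    have h3 : (X:ℝ) ≤ |(z.1:ℝ)| := by
      have : ((X:ℤ):ℝ) ≤ ((|z.1| : ℤ) : ℝ) := by exact_mod_cast hcon.le
      simpa using this
    have h4 : (z.2:ℝ) ≤ H := by exact_mod_cast h2.le
    calc (z.2:ℝ) ≤ H := h4
      _ = ((H:ℝ)^α)^(1/α) := by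
        rw [← Real.rpow_mul hHpos.le, mul_one_div_cancel (by linarith), Real.rpow_one]
      _ ≤ |(z.1:ℝ)|^(1/α) := Real.rpow_le_rpow (by positivity) (hX1.trans h3) hp0.le
  set u : ℤ × ℤ → ℝ := fun z => hitBeforeProb z S (What α h₀) with hu
  set f := ff ((2:ℝ)^(1/α)) K h₀ H with hf
  set w : ℤ × ℤ → ℝ := fun z => f z - 2 * H * u z with hw
  have hu0 : ∀ z, 0 ≤ u z := fun z => hit_nonneg _ _ z
  have hsub : ∀ z ∈ D, w z ≤ avg w z := by
    intro z hz
    rw [hD, Finset.mem_filter, Finset.mem_product, Finset.mem_Ioo] at hz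
    have h1 : z ∉ S := fun h => by
      have := hS z h
      omega
    have h2 : u z = avg u z := hit_avg h1 hz.2
    have h3 : f z ≤ avg f z := ff_sub _ hρ _ _ _ hHpos z
    have h4 : avg w z = avg f z - 2 * H * avg u z := by
      simp only [hw, avg]; ring
    rw [h4, ← h2]
    simp only [hw]
    linarith
  have hbd : ∀ z ∈ D, ∀ d ∈ dirs, z + d ∉ D → w (z + d) ≤ 0 := by
    intro z hz d hd hzd
    rw [hD, Finset.mem_filter, Finset.mem_product, Finset.mem_Ioo, Finset.mem_Icc, ← abs_le] at hz
    obtain ⟨⟨hzx, hz1, hz2⟩, hzW⟩ := hz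
    have hd' : |d.1| ≤ 1 ∧ -1 ≤ d.2 ∧ d.2 ≤ 1 := by
      simp only [dirs, Finset.mem_insert, Finset.mem_singleton] at hd
      rcases hd with rfl | rfl | rfl | rfl <;> simp
    set v := z + d with hv
    have hv2 : v.2 = z.2 + d.2 := rfl
    have hv1 : v.1 = z.1 + d.1 := rfl
    have hv0 : 0 ≤ v.2 := by omega
    have hvH : v.2 ≤ H := by omega
    have hvH' : (v.2:ℝ) ≤ H := by exact_mod_cast hvH
    have hvx : |v.1| < 2^K := by
      have h1 : |v.1| ≤ X + 1 := by
        rw [hv1]; exact (abs_add_le _ _).trans (by omega)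
      have h2 : ((X:ℤ) + 1) < 2^K := by exact_mod_cast hXK
      omega
    have hfle : f v ≤ 3/2 * v.2 - 3/2 * h₀ - 3 * gsum ((2:ℝ)^(1/α)) K v :=
      ff_le _ _ _ _ hHpos v hv0 hvH'
    have hg0 := gsum_nonneg ((2:ℝ)^(1/α)) hρ K v hv0
    have huv : 0 ≤ 2 * H * u v := mul_nonneg (by positivity) (hu0 v)
    simp only [hw]
    by_cases hvW : v ∈ What α h₀
    · rcases hvW with h | h
      · have : (v.2:ℝ) ≤ h₀ := by exact_mod_cast h.2.2
        linarith
      · have h1 := h.2.2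
        have h2 := gsum_lower (1/α) hp0 hp1 K v hv0 hvx
        linarith
    · have hv3 : v.2 = H := by
        by_contra hne
        have hne0 : v.2 ≠ 0 := by
          intro h0
          apply hvW
          have : v = (v.1, 0) := by ext <;> simp [h0]
          rw [this]
          exact line0_What α h₀ hh₀ _
        exact hzd (memD v hvW (by omega) (by omega))
      have hv3' : (v.2:ℝ) = H := by exact_mod_cast hv3
      by_cases hvS : v ∈ S
      · have h1 : u v = 1 := hit_mem hvS hvW
        rw [h1]
        rw [hv3'] at hfle
        linarith
      · have h1 : (H:ℝ) ≤ |(v.1:ℝ)| := by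
          by_contra hcon
          push Not at hcon
          exact hvS (hS2 v hv3 hcon.le)
        have h2 : f v ≤ 0 := ff_far _ hρ _ _ _ hh hHpos v hv0 hvH' h1
        linarith
  have hMD : ((0:ℤ), (M:ℤ)) ∈ D :=
    memD _ (axis_not_What α h₀ hh₀ _ hM) (by simp only; omega) (by simp only; omega)
  have hfin := max_principle D w hsub hbd _ hMD
  have hfM : 1 ≤ f ((0:ℤ), (M:ℤ)) := by
    have h1 := hC K (M:ℤ) (by omega)
    have h2 : (0:ℝ) ≤ (M:ℝ)^3 / (2 * (H:ℝ)^2) := by positivity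
    simp only [hf, ff]
    push_cast at h1 ⊢
    have h3 : (3 * (0:ℝ)^2 * M - (M:ℝ)^3) / (2 * (H:ℝ)^2) = - ((M:ℝ)^3 / (2 * (H:ℝ)^2)) := by ring
    rw [h3]
    linarith
  simp only [hw] at hfin
  rw [div_le_iff₀ (by positivity)]
  have : u (0, (M:ℤ)) * (2 * H) = 2 * H * u (0, (M:ℤ)) := by ring
  change 1 ≤ u (0, (M:ℤ)) * (2 * H)
  linarith

/-- **Lower bound for the escape probabilities.** Let `α > 1` with `α ∉ ℚ ∪ ℚ₂`, `h₀ ≥ 1`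
an integer, `Ŵ` and `ξ₀ = (0, h₀)` as above, `β = 4/(α+3)`, `γ = 2(α−1)/(α+3)`,
`α₁ = β + γ`, `k₀ = max(min{k : 2^{βk} > 2h₀}, 2⌈(α+3)/(α−1)⌉, ⌈3/(α₁−1)⌉)` and
`k_i = k₀ + i`.  Then there is a constant `c > 0` such that for every `i ≥ 0` the walk
started at `ξ₀` satisfies `P_{ξ₀}(τ_{s_i} < τ_{Ŵ}) ≥ c·2^{−k_i}`. -/
theorem escape_prob_lower_bound (α β γ α₁ : ℝ) (hα : 1 < α)
    (hirr : Irrational α) (hQ2 : α ∉ Q2)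
    (hβ : β = 4 / (α + 3)) (hγ : γ = 2 * (α - 1) / (α + 3)) (hα₁ : α₁ = β + γ)
    (h₀ : ℤ) (hh₀ : 1 ≤ h₀)
    (kmin : ℕ) (hkmin : IsLeast {k : ℕ | 2 * (h₀ : ℝ) < (2 : ℝ) ^ (β * k)} kmin)
    (k₀ : ℕ) (hk₀ : k₀ = max kmin (max (2 * ⌈(α + 3) / (α - 1)⌉₊) ⌈3 / (α₁ - 1)⌉₊)) :
    ∃ c : ℝ, 0 < c ∧ ∀ i : ℕ,
      c / 2 ^ (k₀ + i) ≤ exitBeforeProb ((0 : ℤ), h₀) (midSec γ k₀ i) (What α h₀) := by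
  have hp0 : 0 < 1/α := by positivity
  have hγ0 : 0 ≤ γ := by
    rw [hγ]; exact div_nonneg (by linarith) (by linarith)
  have hρ : (0:ℝ) ≤ (2:ℝ)^(1/α) := by positivity
  have hρ2 : (2:ℝ)^(1/α) < 2 := by
    calc (2:ℝ)^(1/α) < (2:ℝ)^(1:ℝ) := by
          apply Real.rpow_lt_rpow_of_exponent_lt (by norm_num)
          rw [div_lt_one (by linarith)]; exact hα
      _ = 2 := by simp
  have hk : kmin ≤ k₀ := by rw [hk₀]; exact le_max_left _ _
  have hh₀' : (1:ℝ) ≤ h₀ := by exact_mod_cast hh₀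
  have hbig : ∀ i : ℕ, h₀ < ((2^(k₀+i) : ℕ) : ℤ) := by
    intro i
    have h1 : 2 * (h₀:ℝ) < (2:ℝ)^(β * kmin) := hkmin.1
    have hβ1 : β ≤ 1 := by
      rw [hβ, div_le_one (by linarith)]; linarith
    have h2 : (2:ℝ)^(β * kmin) ≤ (2:ℝ)^((k₀ + i : ℕ):ℝ) := by
      apply Real.rpow_le_rpow_of_exponent_le (by norm_num)
      have h3 : (kmin:ℝ) ≤ ((k₀ + i : ℕ):ℝ) := by exact_mod_cast (by omega)
      have h4 : (0:ℝ) ≤ kmin := by positivity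
      nlinarith
    rw [Real.rpow_natCast] at h2
    have h5 : (h₀:ℝ) < (2:ℝ)^(k₀+i) := by linarith
    exact_mod_cast h5
  obtain ⟨C, hC⟩ := gsum_axis _ hρ hρ2
  obtain ⟨M₁, hM₁⟩ := exists_nat_ge (4/3 * (1 + 3/2 * (h₀:ℝ) + 3 * C))
  set M := max M₁ (2^k₀) with hMdef
  have hMC : 1 + 3/2 * (h₀:ℝ) + 3 * C ≤ 3/4 * (M:ℝ) := by
    have : (M₁:ℝ) ≤ M := by exact_mod_cast le_max_left _ _
    linarith
  have hM2 : 2^k₀ ≤ M := le_max_right _ _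
  have hMh : h₀ < M := by
    have h1 := hbig 0
    simp only [add_zero] at h1
    have : ((2^k₀ : ℕ):ℤ) ≤ M := by exact_mod_cast hM2
    omega
  refine ⟨1 / (2 * 4^(M+1)), by positivity, fun i => ?_⟩
  set H : ℕ := 2^(k₀+i) with hH
  have hHpos : (0:ℝ) < H := by positivity
  have hHr : ((2:ℝ)^(k₀+i)) = H := by rw [hH]; push_cast; rfl
  have hhH := hbig i
  rw [hHr]
  set S := midSec γ k₀ i with hSdef
  set W := What α h₀ with hW
  have hS : ∀ z : ℤ × ℤ, z ∈ S → z.2 = H := by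
    intro z hz
    rw [hz.1, hH]; push_cast; rfl
  have hsum0 : 0 ≤ ∑ j ∈ Finset.Icc 1 i, (2 : ℝ) ^ ((1 + γ) * ((k₀ + j : ℕ) : ℝ)) :=
    Finset.sum_nonneg fun j _ => by positivity
  have hHS : ((0:ℤ), (H:ℤ)) ∈ S := by
    refine ⟨by simp [hH], ?_⟩
    simpa using hsum0
  -- a good height
  obtain ⟨y, hyh, hyM, hyH, hyu⟩ : ∃ y : ℕ, h₀ < y ∧ y ≤ M ∧ y ≤ H ∧
      1 / (2 * (H:ℝ)) ≤ hitBeforeProb (0, (y:ℤ)) S W := by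
    rcases le_or_gt H M with h | h
    · refine ⟨H, hhH, h, le_rfl, ?_⟩
      rw [hit_mem hHS (axis_not_What α h₀ hh₀ _ hhH), div_le_one (by positivity)]
      have : (1:ℝ) ≤ H := by exact_mod_cast (Nat.one_le_two_pow : 1 ≤ 2^(k₀+i))
      linarith
    · refine ⟨M, hMh, le_rfl, h.le, ?_⟩
      have hi : 1 ≤ i := by
        by_contra hi
        have : i = 0 := by omega
        rw [hH, this, add_zero] at h
        omega
      apply hit_lower α hα h₀ hh₀ C hC S H hS _ M hMh h hMC
      intro z hz1 hz2
      refine ⟨by rw [hz1, hH]; push_cast; rfl, hz2.trans ?_⟩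
      have h1 : (2 : ℝ) ^ ((1 + γ) * ((k₀ + i : ℕ) : ℝ)) ≤
          ∑ j ∈ Finset.Icc 1 i, (2 : ℝ) ^ ((1 + γ) * ((k₀ + j : ℕ) : ℝ)) :=
        Finset.single_le_sum (f := fun j : ℕ => (2 : ℝ) ^ ((1 + γ) * ((k₀ + j : ℕ) : ℝ)))
          (fun j _ => by positivity) (Finset.mem_Icc.2 ⟨hi, le_rfl⟩)
      refine le_trans ?_ h1
      rw [← hHr, ← Real.rpow_natCast]
      apply Real.rpow_le_rpow_of_exponent_le (by norm_num)
      have : (0:ℝ) ≤ ((k₀ + i : ℕ):ℝ) := by positivity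
      nlinarith
  obtain ⟨j, hj⟩ : ∃ j : ℕ, (y:ℤ) = h₀ + 1 + j := ⟨((y:ℤ) - h₀ - 1).toNat, by omega⟩
  have hch := hit_chain S W (h₀ + 1) j (by
    intro m hm
    refine ⟨fun h => ?_, axis_not_What α h₀ hh₀ _ (by omega)⟩
    have := hS _ h
    simp only at this
    omega)
  rw [← hj] at hch
  have hex := avg_ge_up (fun w => hitBeforeProb w S W) (fun w => hit_nonneg S W w) ((0:ℤ), h₀)
  rw [← exit_avg] at hex
  have e : (((0:ℤ), h₀) + ((0:ℤ), (1:ℤ))) = ((0:ℤ), h₀ + 1) := by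
    ext <;> simp
  simp only [e] at hex
  refine le_trans ?_ hex
  have hjM : j ≤ M := by omega
  calc 1 / (2 * 4^(M+1)) / (H:ℝ) = 1 / (2 * (H:ℝ)) / 4^M / 4 := by
        rw [pow_succ]; field_simp
    _ ≤ 1 / (2 * (H:ℝ)) / 4^j / 4 := by
        gcongr
        norm_num
    _ ≤ hitBeforeProb (0, (y:ℤ)) S W / 4^j / 4 := by gcongr
    _ ≤ hitBeforeProb (0, h₀ + 1) S W / 4 := by gcongr

end SHM
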